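/- arXiv:1509.05878 — 2 statements merged into one kernel-verified Lean document; each statement's English description precedes it below -/
import Mathlib

section
/- Let M ∈ ℕ₀ and 0 ≤ κ < 1, and let P be a point set in [0,1)² with N = 2^{M+κ} points. Suppose j = (j₁,j₂) ∈ ℕ₀² with |j| = M+1 and m ∈ 𝔻_j are such that I_{j,m} contains exactly one point p of P. Let j' = (j₁+1,j₂) and j'' = (j₁,j₂+1), and let m' ∈ 𝔻_{j'} and m'' ∈ 𝔻_{j''} be the unique indices with p ∈ I_{j',m'} ⊂ I_{j,m} and p ∈ I_{j'',m''} ⊂ I_{j,m}. Then ρ_{j,m} := μ_{j,m}² + μ_{j',m'}² + μ_{j'',m''}² satisfies 2^{2M}·ρ_{j,m} ≥ 2^{-2}·γ(κ−1). -/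
open MeasureTheory

noncomputable section

/-- The half-open unit square `[0,1) × [0,1)` in `ℝ × ℝ`. -/
def unitSq : Set (ℝ × ℝ) := Set.Ico (0:ℝ) 1 ×ˢ Set.Ico (0:ℝ) 1

/-- The discrepancy function of the point configuration `p`. -/
def disc (N : ℕ) (p : Fin N → ℝ × ℝ) (x : ℝ × ℝ) : ℝ :=
  (∑ i : Fin N, if 0 ≤ (p i).1 ∧ (p i).1 < x.1 ∧ 0 ≤ (p i).2 ∧ (p i).2 < x.2
    then (1:ℝ) else 0) - N * x.1 * x.2

/-- The dyadic interval `I_{j,m}`. -/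
def dyadic (j m : ℕ × ℕ) : Set (ℝ × ℝ) :=
  Set.Ico ((m.1:ℝ)/2^j.1) (((m.1:ℝ)+1)/2^j.1) ×ˢ
    Set.Ico ((m.2:ℝ)/2^j.2) (((m.2:ℝ)+1)/2^j.2)

/-- The one-dimensional Haar function adapted to `[m/2^j, (m+1)/2^j)`. -/
def haar1 (j m : ℕ) (t : ℝ) : ℝ :=
  if (m:ℝ)/2^j ≤ t ∧ t < (2*(m:ℝ)+1)/2^(j+1) then 1
  else if (2*(m:ℝ)+1)/2^(j+1) ≤ t ∧ t < ((m:ℝ)+1)/2^j then -1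
  else 0

/-- The two-dimensional Haar function `h_{j,m}`. -/
def haar (j m : ℕ × ℕ) (x : ℝ × ℝ) : ℝ := haar1 j.1 m.1 x.1 * haar1 j.2 m.2 x.2

/-- `g_κ(α,β) = (αβ − 2^{κ-2})² + (α(1−β) − 2^{κ-4})² + ((1−α)β − 2^{κ-4})²`. -/
def gk (κ α β : ℝ) : ℝ :=
  (α * β - (2:ℝ) ^ (κ - 2)) ^ 2 + (α * (1 - β) - (2:ℝ) ^ (κ - 4)) ^ 2 +
    ((1 - α) * β - (2:ℝ) ^ (κ - 4)) ^ 2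

/-- `h(κ) = inf { g_κ(α,β) : 1/2 ≤ α < 1, 1/2 ≤ β < 1 }`. -/
def hfun (κ : ℝ) : ℝ :=
  sInf { t : ℝ | ∃ α β : ℝ, 1/2 ≤ α ∧ α < 1 ∧ 1/2 ≤ β ∧ β < 1 ∧ t = gk κ α β }

/-- `γ(κ) = min(9·2^{2κ-13}, 2^{-4}·h(κ))`. -/
def gam (κ : ℝ) : ℝ := min (9 * (2:ℝ) ^ (2 * κ - 13)) ((2:ℝ) ^ (-4 : ℝ) * hfun κ)

/-- Distance to the boundary of the dyadic interval, cut off at zero. -/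
def tent (j m : ℕ) (z : ℝ) : ℝ := max 0 (min (z - (m:ℝ)/2^j) (((m:ℝ)+1)/2^j - z))

lemma haar1_eq (j m : ℕ) (t : ℝ) : haar1 j m t =
    (Set.Ico ((m:ℝ)/2^j) ((2*(m:ℝ)+1)/2^(j+1))).indicator (fun _ => (1:ℝ)) t
    - (Set.Ico ((2*(m:ℝ)+1)/2^(j+1)) (((m:ℝ)+1)/2^j)).indicator (fun _ => (1:ℝ)) t := by
  unfold haar1
  simp only [Set.indicator, Set.mem_Ico]
  split_ifs <;> linarith

lemma dy_order (j m : ℕ) (hm : m < 2^j) : (0:ℝ) ≤ (m:ℝ)/2^j ∧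
    (2*(m:ℝ)+1)/2^(j+1) = (m:ℝ)/2^j + 1/2^j/2 ∧ ((m:ℝ)+1)/2^j = (m:ℝ)/2^j + 1/2^j ∧
    ((m:ℝ)+1)/2^j ≤ 1 ∧ (0:ℝ) < 1/2^j := by
  have h2 : (0:ℝ) < 2^j := by positivity
  have : ((m:ℝ)+1) ≤ 2^j := by exact_mod_cast hm
  refine ⟨by positivity, by rw [pow_succ]; field_simp, by field_simp, ?_, by positivity⟩
  rw [div_le_one h2]; exact this

lemma measurable_haar1 (j m : ℕ) : Measurable (haar1 j m) := by
  have : haar1 j m = fun t => haar1 j m t := rfl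
  rw [this]
  simp only [haar1_eq]
  exact (measurable_const.indicator measurableSet_Ico).sub
    (measurable_const.indicator measurableSet_Ico)

lemma abs_haar1_le (j m : ℕ) (t : ℝ) : ‖haar1 j m t‖ ≤ 1 := by
  unfold haar1
  split_ifs <;> simp

lemma haar1_integrable (j m : ℕ) (f : ℝ → ℝ) (hf : IntegrableOn f (Set.Ico 0 1)) :
    IntegrableOn (fun t => f t * haar1 j m t) (Set.Ico 0 1) :=
  Integrable.mul_bdd (c := 1) hf (measurable_haar1 j m).aestronglyMeasurable
    (Filter.Eventually.of_forall (abs_haar1_le j m))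

lemma ind_int (f : ℝ → ℝ) (a b : ℝ) (h0 : 0 ≤ a) (h1 : b ≤ 1) (hab : a ≤ b) :
    ∫ t in Set.Ico (0:ℝ) 1, f t * (Set.Ico a b).indicator (fun _ => (1:ℝ)) t
      = ∫ t in a..b, f t := by
  have : (fun t => f t * (Set.Ico a b).indicator (fun _ => (1:ℝ)) t)
      = (Set.Ico a b).indicator f := by
    ext t; simp [Set.indicator]
  rw [this, setIntegral_indicator measurableSet_Ico,
    Set.inter_eq_self_of_subset_right (Set.Ico_subset_Ico h0 h1),
    intervalIntegral.integral_of_le hab, integral_Ico_eq_integral_Ioc]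

lemma ind_integrable (f : ℝ → ℝ) (hf : IntegrableOn f (Set.Ico 0 1)) (a b : ℝ) :
    IntegrableOn (fun t => f t * (Set.Ico a b).indicator (fun _ => (1:ℝ)) t) (Set.Ico 0 1) := by
  have : (fun t => f t * (Set.Ico a b).indicator (fun _ => (1:ℝ)) t)
      = (Set.Ico a b).indicator f := by
    ext t; simp [Set.indicator]
  rw [this]
  exact Integrable.indicator hf measurableSet_Ico

lemma haar1_int (j m : ℕ) (hm : m < 2^j) (f : ℝ → ℝ) (hf : IntegrableOn f (Set.Ico 0 1)) :
    ∫ t in Set.Ico (0:ℝ) 1, f t * haar1 j m t =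
      (∫ t in ((m:ℝ)/2^j)..((m:ℝ)/2^j + 1/2^j/2), f t)
      - ∫ t in ((m:ℝ)/2^j + 1/2^j/2)..((m:ℝ)/2^j + 1/2^j), f t := by
  obtain ⟨h0, hc, hb, h1, hd⟩ := dy_order j m hm
  simp only [haar1_eq, mul_sub]
  rw [integral_sub (ind_integrable f hf _ _) (ind_integrable f hf _ _), ind_int, ind_int, hc, hb]
  all_goals (try rw [hc]) 
  all_goals (try rw [hb]) 
  all_goals linarith

lemma step_int (z a b : ℝ) (hab : a ≤ b) :
    ∫ t in a..b, (if z < t then (1:ℝ) else 0) = max 0 (b - max a z) := by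
  have : (fun t => if z < t then (1:ℝ) else 0) = (Set.Ioi z).indicator (fun _ => (1:ℝ)) := by
    ext t; simp [Set.indicator]
  rw [this, intervalIntegral.integral_of_le hab, setIntegral_indicator measurableSet_Ioi,
    Set.Ioc_inter_Ioi]
  simp [max_comm]

lemma step_integrable (z : ℝ) :
    IntegrableOn (fun t => if z < t then (1:ℝ) else 0) (Set.Ico 0 1) := by
  have : (fun t => if z < t then (1:ℝ) else 0) = (Set.Ioi z).indicator (fun _ => (1:ℝ)) := by
    ext t; simp [Set.indicator]
  rw [this]
  exact Integrable.indicator (by simp) measurableSet_Ioi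

lemma id_integrable : IntegrableOn (fun t : ℝ => t) (Set.Ico 0 1) :=
  (continuous_id.integrableOn_Icc (a := (0:ℝ)) (b := 1)).mono_set Set.Ico_subset_Icc_self

lemma haar1_step (j m : ℕ) (hm : m < 2^j) (z : ℝ) :
    ∫ t in Set.Ico (0:ℝ) 1, (if z < t then (1:ℝ) else 0) * haar1 j m t = - tent j m z := by
  obtain ⟨h0, hc, hb, h1, hd⟩ := dy_order j m hm
  rw [haar1_int j m hm _ (step_integrable z), step_int _ _ _ (by linarith),
    step_int _ _ _ (by linarith), tent, hb]
  generalize (m:ℝ)/2^j = a at *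
  generalize (1:ℝ)/2^j = d at *
  grind

lemma haar1_id (j m : ℕ) (hm : m < 2^j) :
    ∫ t in Set.Ico (0:ℝ) 1, t * haar1 j m t = - (1/2^j/2)^2 := by
  rw [haar1_int j m hm _ id_integrable, integral_id, integral_id]
  ring

lemma mu_eq (N : ℕ) (p : Fin N → ℝ × ℝ) (hp : ∀ i, p i ∈ unitSq)
    (j m : ℕ × ℕ) (hm1 : m.1 < 2 ^ j.1) (hm2 : m.2 < 2 ^ j.2) :
    ∫ x in unitSq, disc N p x * haar j m x =
      (∑ i, tent j.1 m.1 (p i).1 * tent j.2 m.2 (p i).2)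
        - N * ((1/2^j.1/2)^2 * (1/2^j.2/2)^2) := by
  have key : ∀ x : ℝ × ℝ, disc N p x * haar j m x =
      (∑ i, ((if (p i).1 < x.1 then (1:ℝ) else 0) * haar1 j.1 m.1 x.1) *
        ((if (p i).2 < x.2 then (1:ℝ) else 0) * haar1 j.2 m.2 x.2))
      - N * ((x.1 * haar1 j.1 m.1 x.1) * (x.2 * haar1 j.2 m.2 x.2)) := by
    intro x
    unfold disc haar
    rw [sub_mul, Finset.sum_mul]
    congr 1
    · refine Finset.sum_congr rfl fun i _ => ?_
      have := hp i
      simp only [unitSq, Set.mem_prod, Set.mem_Ico] at this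
      obtain ⟨⟨h1, _⟩, ⟨h2, _⟩⟩ := this
      by_cases ha : (p i).1 < x.1 <;> by_cases hb : (p i).2 < x.2 <;> simp [ha, hb, h1, h2]
    · ring
  have hI : ∀ f g : ℝ → ℝ, IntegrableOn f (Set.Ico 0 1) → IntegrableOn g (Set.Ico 0 1) →
      IntegrableOn (fun x : ℝ × ℝ => f x.1 * g x.2) unitSq := by
    intro f g hf hg
    unfold unitSq IntegrableOn
    rw [Measure.volume_eq_prod, ← Measure.prod_restrict]
    exact Integrable.mul_prod hf hg
  have hE : ∀ f g : ℝ → ℝ, ∫ x in unitSq, f x.1 * g x.2 =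
      (∫ t in Set.Ico (0:ℝ) 1, f t) * ∫ t in Set.Ico (0:ℝ) 1, g t := by
    intro f g
    unfold unitSq
    rw [Measure.volume_eq_prod]
    exact setIntegral_prod_mul f g _ _
  have h1 : ∀ i, IntegrableOn (fun x : ℝ × ℝ =>
      ((if (p i).1 < x.1 then (1:ℝ) else 0) * haar1 j.1 m.1 x.1) *
        ((if (p i).2 < x.2 then (1:ℝ) else 0) * haar1 j.2 m.2 x.2)) unitSq := fun i =>
    hI (fun t => (if (p i).1 < t then (1:ℝ) else 0) * haar1 j.1 m.1 t)
      (fun t => (if (p i).2 < t then (1:ℝ) else 0) * haar1 j.2 m.2 t)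
      (haar1_integrable _ _ _ (step_integrable _)) (haar1_integrable _ _ _ (step_integrable _))
  have h2 : IntegrableOn (fun x : ℝ × ℝ =>
      (x.1 * haar1 j.1 m.1 x.1) * (x.2 * haar1 j.2 m.2 x.2)) unitSq :=
    hI (fun t => t * haar1 j.1 m.1 t) (fun t => t * haar1 j.2 m.2 t)
      (haar1_integrable _ _ _ id_integrable) (haar1_integrable _ _ _ id_integrable)
  simp only [key]
  rw [integral_sub (integrable_finsetSum _ fun i _ => h1 i) (h2.const_mul _),
    integral_finsetSum _ (fun i _ => h1 i), integral_const_mul]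
  congr 1
  · refine Finset.sum_congr rfl fun i _ => ?_
    have := hE (fun t => (if (p i).1 < t then (1:ℝ) else 0) * haar1 j.1 m.1 t)
      (fun t => (if (p i).2 < t then (1:ℝ) else 0) * haar1 j.2 m.2 t)
    rw [this, haar1_step _ _ hm1, haar1_step _ _ hm2]
    ring
  · have := hE (fun t => t * haar1 j.1 m.1 t) (fun t => t * haar1 j.2 m.2 t)
    rw [this, haar1_id _ _ hm1, haar1_id _ _ hm2]
    ring

lemma tent_zero (j m : ℕ) (z : ℝ) (h : z ∉ Set.Ico ((m:ℝ)/2^j) (((m:ℝ)+1)/2^j)) :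
    tent j m z = 0 := by
  rw [Set.mem_Ico] at h
  unfold tent
  grind

lemma mu_single (N : ℕ) (p : Fin N → ℝ × ℝ) (hp : ∀ i, p i ∈ unitSq)
    (j m : ℕ × ℕ) (hm1 : m.1 < 2 ^ j.1) (hm2 : m.2 < 2 ^ j.2) (i₀ : Fin N)
    (huniq : ∀ i, p i ∈ dyadic j m → i = i₀) :
    ∫ x in unitSq, disc N p x * haar j m x =
      tent j.1 m.1 (p i₀).1 * tent j.2 m.2 (p i₀).2
        - N * ((1/2^j.1/2)^2 * (1/2^j.2/2)^2) := by
  rw [mu_eq N p hp j m hm1 hm2, Finset.sum_eq_single i₀]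
  · intro i _ hi
    by_cases h1 : (p i).1 ∈ Set.Ico ((m.1:ℝ)/2^j.1) (((m.1:ℝ)+1)/2^j.1)
    · by_cases h2 : (p i).2 ∈ Set.Ico ((m.2:ℝ)/2^j.2) (((m.2:ℝ)+1)/2^j.2)
      · exact absurd (huniq i ⟨h1, h2⟩) hi
      · rw [tent_zero _ _ _ h2, mul_zero]
    · rw [tent_zero _ _ _ h1, zero_mul]
  · simp

lemma tent_nonneg (j m : ℕ) (z : ℝ) : 0 ≤ tent j m z := le_max_left _ _

lemma tent_le (j m : ℕ) (z : ℝ) : 2^j * 2 * tent j m z ≤ 1 := by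
  have h2 : (0:ℝ) < 2^j := by positivity
  have : tent j m z ≤ 1/2^j/2 := by
    have hb : ((m:ℝ)+1)/2^j = (m:ℝ)/2^j + 1/2^j := by field_simp
    have : (0:ℝ) < 1/2^j := by positivity
    unfold tent
    rw [hb]
    grind
  calc 2^j * 2 * tent j m z ≤ 2^j * 2 * (1/2^j/2) := by gcongr
    _ = 1 := by field_simp

lemma dy_mem (j m : ℕ) (z : ℝ) : z ∈ Set.Ico ((m:ℝ)/2^j) (((m:ℝ)+1)/2^j) ↔
    (m:ℝ) ≤ 2^j * z ∧ 2^j * z < m + 1 := by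
  have h2 : (0:ℝ) < 2^j := by positivity
  rw [Set.mem_Ico, div_le_iff₀ h2, lt_div_iff₀ h2, mul_comm]

lemma tent_scaled (j m : ℕ) (z : ℝ) :
    2^j * tent j m z = max 0 (min (2^j*z - m) (m + 1 - 2^j * z)) := by
  have h2 : (0:ℝ) < 2^j := by positivity
  unfold tent
  rw [mul_max_of_nonneg _ _ h2.le, mul_min_of_nonneg _ _ h2.le]
  rw [mul_zero]
  congr 2 <;> field_simp

lemma dy_half (j m m' : ℕ) (z : ℝ) (h : z ∈ Set.Ico ((m:ℝ)/2^j) (((m:ℝ)+1)/2^j))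
    (h' : z ∈ Set.Ico ((m':ℝ)/2^(j+1)) (((m':ℝ)+1)/2^(j+1))) :
    m' = 2*m ∨ m' = 2*m+1 := by
  rw [dy_mem] at h h'
  rw [pow_succ] at h'
  have h1 : (m':ℝ) < 2*m+2 := by linarith
  have h2 : (2*m:ℝ) < m'+1 := by linarith
  have h1 : m' < 2*m+2 := by exact_mod_cast h1
  have h2 : 2*m < m'+1 := by exact_mod_cast h2
  omega

lemma dy_same (j m m' : ℕ) (z : ℝ) (h : z ∈ Set.Ico ((m:ℝ)/2^j) (((m:ℝ)+1)/2^j))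
    (h' : z ∈ Set.Ico ((m':ℝ)/2^j) (((m':ℝ)+1)/2^j)) : m' = m := by
  rw [dy_mem] at h h'
  have h1 : (m':ℝ) < m+1 := by linarith
  have h2 : (m:ℝ) < m'+1 := by linarith
  have h1 : m' < m+1 := by exact_mod_cast h1
  have h2 : m < m'+1 := by exact_mod_cast h2
  omega

lemma dy_sub (j m m' : ℕ) (z : ℝ) (hm : m' = 2*m ∨ m' = 2*m+1)
    (h' : z ∈ Set.Ico ((m':ℝ)/2^(j+1)) (((m':ℝ)+1)/2^(j+1))) :
    z ∈ Set.Ico ((m:ℝ)/2^j) (((m:ℝ)+1)/2^j) := by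
  rw [dy_mem] at *
  rw [pow_succ] at h'
  rcases hm with rfl | rfl <;> push_cast at h' <;> constructor <;> linarith

lemma tent_half (j m m' : ℕ) (z : ℝ) (h : z ∈ Set.Ico ((m:ℝ)/2^j) (((m:ℝ)+1)/2^j))
    (h' : z ∈ Set.Ico ((m':ℝ)/2^(j+1)) (((m':ℝ)+1)/2^(j+1))) :
    2^j * 2 * tent (j+1) m' z = min (2^j*2*tent j m z) (1 - 2^j*2*tent j m z) := by
  have hm := dy_half j m m' z h h'
  rw [dy_mem] at h h'
  have e1 := tent_scaled (j+1) m' z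
  have e2 := tent_scaled j m z
  rw [pow_succ] at e1 h'
  have e3 : 2^j * 2 * tent j m z = 2 * (2^j * tent j m z) := by ring
  rw [e1, e3, e2]
  have e4 : (2:ℝ)^j * 2 * z = 2 * (2^j * z) := by ring
  rw [e4] at h' ⊢
  clear e1 e2 e3 e4
  generalize (2:ℝ)^j * z = w at *
  rcases hm with rfl | rfl <;> push_cast at * <;> grind

lemma hfun_le_closed (κ α β : ℝ) (hα : 1/2 ≤ α) (hα1 : α ≤ 1) (hβ : 1/2 ≤ β) (hβ1 : β ≤ 1) :
    hfun κ ≤ gk κ α β := by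
  have hbdd : BddBelow { t : ℝ | ∃ α β : ℝ, 1/2 ≤ α ∧ α < 1 ∧ 1/2 ≤ β ∧ β < 1 ∧ t = gk κ α β } := by
    refine ⟨0, ?_⟩
    rintro t ⟨a, b, _, _, _, _, rfl⟩
    unfold gk; positivity
  have hc : Continuous fun e : ℝ => gk κ (α + e * (1/2 - α)) (β + e * (1/2 - β)) := by
    unfold gk; fun_prop
  have ht : Filter.Tendsto (fun e : ℝ => gk κ (α + e * (1/2 - α)) (β + e * (1/2 - β)))
      (nhdsWithin 0 (Set.Ioi 0)) (nhds (gk κ α β)) := by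
    have := hc.tendsto 0
    simp only [zero_mul, add_zero] at this
    exact this.mono_left nhdsWithin_le_nhds
  refine ge_of_tendsto ht ?_
  have : Set.Ioo (0:ℝ) 1 ∈ nhdsWithin (0:ℝ) (Set.Ioi 0) := Ioo_mem_nhdsGT one_pos
  filter_upwards [this] with e he
  obtain ⟨he0, he1⟩ := he
  refine csInf_le hbdd ⟨_, _, ?_, ?_, ?_, ?_, rfl⟩ <;> nlinarith

lemma core (κ α β : ℝ) (hα0 : 0 ≤ α) (hα1 : α ≤ 1) (hβ0 : 0 ≤ β) (hβ1 : β ≤ 1) :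
    16 * gam κ ≤ (α * β - (2:ℝ)^κ/4)^2 + (min α (1-α) * β - (2:ℝ)^κ/16)^2
      + (α * min β (1-β) - (2:ℝ)^κ/16)^2 := by
  have e1 : (2:ℝ)^(2*κ-13) = ((2:ℝ)^κ)^2 / 8192 := by
    rw [Real.rpow_sub two_pos, mul_comm, Real.rpow_mul two_pos.le]; norm_num
  have e2 : (2:ℝ)^(-4:ℝ) = 1/16 := by
    rw [show (-4:ℝ) = ((-4:ℤ):ℝ) by norm_num, Real.rpow_intCast]; norm_num
  have e3 : (2:ℝ)^(κ-2) = (2:ℝ)^κ/4 := by rw [Real.rpow_sub two_pos]; norm_num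
  have e4 : (2:ℝ)^(κ-4) = (2:ℝ)^κ/16 := by rw [Real.rpow_sub two_pos]; norm_num
  have g1 : gam κ ≤ 9 * (((2:ℝ)^κ)^2 / 8192) := by rw [← e1]; exact min_le_left _ _
  have g2 : gam κ ≤ 1/16 * hfun κ := by rw [← e2]; exact min_le_right _ _
  by_cases ha : α < 1/2
  · rw [min_eq_left (by linarith : α ≤ 1 - α)]
    nlinarith [sq_nonneg (α * β - (2:ℝ)^κ * (5/32)), sq_nonneg (α * min β (1-β) - (2:ℝ)^κ/16)]
  by_cases hb : β < 1/2
  · rw [min_eq_left (by linarith : β ≤ 1 - β)]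
    nlinarith [sq_nonneg (α * β - (2:ℝ)^κ * (5/32)), sq_nonneg (min α (1-α) * β - (2:ℝ)^κ/16)]
  push Not at ha hb
  have := hfun_le_closed κ α β ha hα1 hb hβ1
  rw [min_eq_right (by linarith : 1 - α ≤ α), min_eq_right (by linarith : 1 - β ≤ β)]
  unfold gk at this
  rw [e3, e4] at this
  linarith

/-- If `N = 2^{M+κ}`, `|j| = M+1`, and `I_{j,m}` contains exactly one point `p i₀` of `P`,
and `I_{j',m'}, I_{j'',m''}` (with `j' = (j₁+1,j₂)`, `j'' = (j₁,j₂+1)`) are the dyadic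
subintervals of `I_{j,m}` containing the same point, then
`2^{2M}·(μ_{j,m}² + μ_{j',m'}² + μ_{j'',m''}²) ≥ 2^{-2}·γ(κ−1)`. -/
theorem rho_lower_bound_levelM1 (M : ℕ) (κ : ℝ) (hκ0 : 0 ≤ κ) (hκ1 : κ < 1)
    (N : ℕ) (p : Fin N → ℝ × ℝ) (hp : ∀ i, p i ∈ unitSq)
    (hN : (N : ℝ) = 2 ^ ((M : ℝ) + κ))
    (j : ℕ × ℕ) (hj : j.1 + j.2 = M + 1)
    (m : ℕ × ℕ) (hm1 : m.1 < 2 ^ j.1) (hm2 : m.2 < 2 ^ j.2)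
    (i₀ : Fin N) (hi₀ : p i₀ ∈ dyadic j m)
    (huniq : ∀ i, p i ∈ dyadic j m → i = i₀)
    (m' : ℕ × ℕ) (hm'1 : m'.1 < 2 ^ (j.1 + 1)) (hm'2 : m'.2 < 2 ^ j.2)
    (hpm' : p i₀ ∈ dyadic (j.1 + 1, j.2) m')
    (m'' : ℕ × ℕ) (hm''1 : m''.1 < 2 ^ j.1) (hm''2 : m''.2 < 2 ^ (j.2 + 1))
    (hpm'' : p i₀ ∈ dyadic (j.1, j.2 + 1) m'') :
    (2:ℝ) ^ (-2 : ℝ) * gam (κ - 1) ≤ (2:ℝ) ^ (2 * M) *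
      ((∫ x in unitSq, disc N p x * haar j m x) ^ 2 +
       (∫ x in unitSq, disc N p x * haar (j.1 + 1, j.2) m' x) ^ 2 +
       (∫ x in unitSq, disc N p x * haar (j.1, j.2 + 1) m'' x) ^ 2) := by
  have q1 := hi₀.1
  have q2 := hi₀.2
  have q1' := hpm'.1
  have q2' := hpm'.2
  have q1'' := hpm''.1
  have q2'' := hpm''.2
  simp only at q1' q2' q1'' q2''
  have s2 := dy_same _ _ _ _ q2 q2'
  have s1 := dy_same _ _ _ _ q1 q1''
  have u' : ∀ i, p i ∈ dyadic (j.1 + 1, j.2) m' → i = i₀ := fun i hi =>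
    huniq i ⟨dy_sub _ _ _ _ (dy_half _ _ _ _ q1 q1') hi.1, by have := hi.2; rwa [s2] at this⟩
  have u'' : ∀ i, p i ∈ dyadic (j.1, j.2 + 1) m'' → i = i₀ := fun i hi =>
    huniq i ⟨by have := hi.1; rwa [s1] at this, dy_sub _ _ _ _ (dy_half _ _ _ _ q2 q2'') hi.2⟩
  rw [mu_single N p hp j m hm1 hm2 i₀ huniq,
    mu_single N p hp (j.1 + 1, j.2) m' hm'1 hm'2 i₀ u',
    mu_single N p hp (j.1, j.2 + 1) m'' hm''1 hm''2 i₀ u'']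
  simp only
  have t1 := tent_half _ _ _ _ q1 q1'
  have t2 := tent_half _ _ _ _ q2 q2''
  have hc := core (κ - 1) (2^j.1*2*tent j.1 m.1 (p i₀).1) (2^j.2*2*tent j.2 m.2 (p i₀).2)
    (mul_nonneg (by positivity) (tent_nonneg _ _ _)) (tent_le _ _ _)
    (mul_nonneg (by positivity) (tent_nonneg _ _ _)) (tent_le _ _ _)
  rw [← t1, ← t2] at hc
  rw [s1, s2]
  have hD : (2:ℝ)^j.1 * 2^j.2 = 2 * 2^M := by rw [← pow_add, hj, pow_succ]; ring
  have hs : (N:ℝ) = 2^j.1 * 2^j.2 * (2:ℝ)^(κ-1) := by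
    rw [hD, hN, Real.rpow_add two_pos, Real.rpow_natCast, Real.rpow_sub two_pos, Real.rpow_one]
    ring
  have e2 : (2:ℝ)^(-2:ℝ) = 1/4 := by
    rw [show (-2:ℝ) = ((-2:ℤ):ℝ) by norm_num, Real.rpow_intCast]; norm_num
  have hMM : (2:ℝ)^(2*M) = (2^j.1 * 2^j.2)^2/4 := by rw [hD, mul_comm 2 M, pow_mul]; ring
  rw [e2, hMM, hs]
  simp only [pow_succ (2:ℝ) j.1, pow_succ (2:ℝ) j.2]
  have p1 : (2:ℝ)^j.1 ≠ 0 := by positivity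
  have p2 : (2:ℝ)^j.2 ≠ 0 := by positivity
  clear t1 t2 hD hs hMM q1 q2 q1' q2' q1'' q2'' hN hm1 hm2 hm'1 hm'2 hm''1 hm''2
  generalize (2:ℝ)^j.1 = A at *
  generalize (2:ℝ)^j.2 = B at *
  generalize (2:ℝ)^(κ-1) = s at *
  generalize tent j.1 m.1 (p i₀).1 = a at *
  generalize tent j.2 m.2 (p i₀).2 = b at *
  generalize tent (j.1+1) m'.1 (p i₀).1 = a' at *
  generalize tent (j.2+1) m''.2 (p i₀).2 = b' at *
  have r1 : A * 2 * a * (B * 2 * b) - s/4 =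
      4 * (A * B) * (a * b - A * B * s * ((1/A/2)^2 * (1/B/2)^2)) := by
    field_simp; ring
  have r2 : A * 2 * a' * (B * 2 * b) - s/16 =
      4 * (A * B) * (a' * b - A * B * s * ((1/(A*2)/2)^2 * (1/B/2)^2)) := by
    field_simp; ring
  have r3 : A * 2 * a * (B * 2 * b') - s/16 =
      4 * (A * B) * (a * b' - A * B * s * ((1/A/2)^2 * (1/(B*2)/2)^2)) := by
    field_simp; ring
  rw [r1, r2, r3] at hc
  linarith


end
end

section
/- Let M ∈ ℕ₀ and 0 ≤ κ < 1, and let P be a point set in [0,1)² with N = 2^{M+κ} points. Then ‖D_P | L₂‖² ≥ Σ_{ℓ=M+1}^∞ (ℓ+1)·2^ℓ·(2^ℓ − 2^{M+κ})·2^{2M+2κ−4ℓ−8}. -/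
open MeasureTheory

noncomputable section

/-- The `L₂`-discrepancy `‖D_P | L₂‖ = (∫_{[0,1)²} D_P(x)² dx)^{1/2}`. -/
def L2disc (N : ℕ) (p : Fin N → ℝ × ℝ) : ℝ :=
  Real.sqrt (∫ x in unitSq, disc N p x ^ 2)

/-- Lebesgue measure on `[0,1)`. -/
def muI : Measure ℝ := volume.restrict (Set.Ico (0:ℝ) 1)

instance : IsFiniteMeasure muI := by unfold muI; infer_instance

lemma restrict_unitSq : (volume : Measure (ℝ × ℝ)).restrict unitSq = muI.prod muI := by
  unfold muI unitSq
  rw [Measure.prod_restrict]; rfl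

lemma bessel_aux {α ι : Type*} [MeasurableSpace α] (μ : Measure α) (s : Finset ι)
    (D : α → ℝ) (f : ι → α → ℝ) (c : ι → ℝ) (hD : MemLp D 2 μ) (hf : ∀ i, MemLp (f i) 2 μ)
    (hc : ∀ i ∈ s, 0 < c i) (hcc : ∀ i ∈ s, ∫ x, f i x * f i x ∂μ = c i)
    (ho : ∀ i ∈ s, ∀ k ∈ s, i ≠ k → ∫ x, f i x * f k x ∂μ = 0) :
    ∑ i ∈ s, (∫ x, D x * f i x ∂μ) ^ 2 / c i ≤ ∫ x, D x ^ 2 ∂μ := by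
  classical
  set d : ι → ℝ := fun i => ∫ x, D x * f i x ∂μ with hd
  set a : ι → ℝ := fun i => d i / c i with ha
  have iDD : Integrable (fun x => D x * D x) μ := hD.integrable_mul hD
  have iDf : ∀ i, Integrable (fun x => D x * f i x) μ := fun i => hD.integrable_mul (hf i)
  have iff' : ∀ i k, Integrable (fun x => f i x * f k x) μ :=
    fun i k => (hf i).integrable_mul (hf k)
  have e1 : ∀ x, (D x - ∑ i ∈ s, a i * f i x) ^ 2
      = D x * D x - 2 * (∑ i ∈ s, a i * (D x * f i x))
        + ∑ i ∈ s, ∑ k ∈ s, (a i * a k) * (f i x * f k x) := by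
    intro x
    have h1 : ∑ i ∈ s, a i * (D x * f i x) = D x * ∑ i ∈ s, a i * f i x := by
      rw [Finset.mul_sum]; exact Finset.sum_congr rfl fun i _ => by ring
    have h2 : ∑ i ∈ s, ∑ k ∈ s, (a i * a k) * (f i x * f k x)
        = (∑ i ∈ s, a i * f i x) * ∑ i ∈ s, a i * f i x := by
      rw [Finset.sum_mul_sum]
      exact Finset.sum_congr rfl fun i _ => Finset.sum_congr rfl fun k _ => by ring
    rw [h1, h2]; ring
  have i1 : Integrable (fun x => ∑ i ∈ s, a i * (D x * f i x)) μ :=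
    integrable_finsetSum _ fun i _ => (iDf i).const_mul _
  have i2' : ∀ i, Integrable (fun x => ∑ k ∈ s, (a i * a k) * (f i x * f k x)) μ := fun i =>
    integrable_finsetSum _ fun k _ => (iff' i k).const_mul _
  have i2 : Integrable (fun x => ∑ i ∈ s, ∑ k ∈ s, (a i * a k) * (f i x * f k x)) μ :=
    integrable_finsetSum _ fun i _ => i2' i
  have h0 : 0 ≤ ∫ x, (D x - ∑ i ∈ s, a i * f i x) ^ 2 ∂μ := integral_nonneg fun x => sq_nonneg _
  simp_rw [e1] at h0
  have i3 : Integrable (fun x => D x * D x - 2 * ∑ i ∈ s, a i * (D x * f i x)) μ :=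
    iDD.sub (i1.const_mul 2)
  rw [integral_add i3 i2, integral_sub iDD (i1.const_mul 2),
    integral_const_mul, integral_finsetSum _ (fun i _ => (iDf i).const_mul _),
    integral_finsetSum _ (fun i _ => i2' i)] at h0
  have h3 : ∀ i ∈ s, ∫ x, ∑ k ∈ s, (a i * a k) * (f i x * f k x) ∂μ = d i ^ 2 / c i := by
    intro i hi
    rw [integral_finsetSum _ (fun k _ => (iff' i k).const_mul _)]
    rw [Finset.sum_eq_single i]
    · rw [integral_const_mul, hcc i hi]
      have := (hc i hi).ne'
      simp only [ha]; field_simp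
    · intro k hk hki
      rw [integral_const_mul, ho i hi k hk hki.symm, mul_zero]
    · exact fun h => absurd hi h
  have h4 : ∀ i ∈ s, ∫ x, a i * (D x * f i x) ∂μ = d i ^ 2 / c i := by
    intro i hi
    rw [integral_const_mul]
    simp only [ha, hd]; ring
  rw [Finset.sum_congr rfl h3, Finset.sum_congr rfl h4] at h0
  have h5 : ∫ x, D x ^ 2 ∂μ = ∫ x, D x * D x ∂μ := by simp_rw [pow_two]
  rw [h5]
  linarith

/-- Haar function. -/
def hr (j m : ℕ) (x : ℝ) : ℝ :=
  if ⌊(2:ℝ) ^ (j + 1) * x⌋₊ = 2 * m then 1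
  else if ⌊(2:ℝ) ^ (j + 1) * x⌋₊ = 2 * m + 1 then -1 else 0

lemma hr_meas (j m : ℕ) : Measurable (hr j m) := by
  unfold hr
  have h : Measurable fun x : ℝ => ⌊(2:ℝ) ^ (j + 1) * x⌋₊ :=
    Nat.measurable_floor.comp (measurable_const.mul measurable_id)
  exact Measurable.ite (h (measurableSet_singleton (2*m))) measurable_const
    (Measurable.ite (h (measurableSet_singleton (2*m+1))) measurable_const measurable_const)

lemma hr_bdd (j m : ℕ) (x : ℝ) : |hr j m x| ≤ 1 := by
  unfold hr; split_ifs <;> simp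

lemma floor_half (i j : ℕ) (hij : i ≤ j) (x : ℝ) :
    ⌊(2:ℝ) ^ i * x⌋₊ = ⌊(2:ℝ) ^ j * x⌋₊ / 2 ^ (j - i) := by
  rw [← Nat.floor_div_natCast]
  congr 1
  obtain ⟨k, rfl⟩ := Nat.exists_eq_add_of_le hij
  simp only [Nat.add_sub_cancel_left]
  push_cast
  rw [pow_add]; field_simp

lemma hr_zero (j m : ℕ) (x : ℝ) (h : ⌊(2:ℝ) ^ j * x⌋₊ ≠ m) : hr j m x = 0 := by
  rw [floor_half j (j+1) (by omega)] at h
  simp at h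
  unfold hr
  rw [if_neg (by omega), if_neg (by omega)]

/-- left, mid, right -/
lemma hr_integral (j m : ℕ) (hm : m < 2 ^ j) (φ : ℝ → ℝ) (hφ : Integrable φ muI) :
    ∫ x, φ x * hr j m x ∂muI =
      (∫ x in Set.Ico ((2 * m : ℝ) / 2 ^ (j+1)) ((2 * m + 1 : ℝ) / 2 ^ (j+1)), φ x)
      - ∫ x in Set.Ico ((2 * m + 1 : ℝ) / 2 ^ (j+1)) ((2 * m + 2 : ℝ) / 2 ^ (j+1)), φ x := by
  have hpos : (0:ℝ) < 2 ^ (j+1) := by positivity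
  set A := Set.Ico ((2 * m : ℝ) / 2 ^ (j+1)) ((2 * m + 1 : ℝ) / 2 ^ (j+1)) with hA
  set B := Set.Ico ((2 * m + 1 : ℝ) / 2 ^ (j+1)) ((2 * m + 2 : ℝ) / 2 ^ (j+1)) with hB
  have hm' : (2 * m + 2 : ℝ) ≤ 2 ^ (j+1) := by
    have : 2 * m + 2 ≤ 2 ^ (j+1) := by rw [pow_succ]; omega
    exact_mod_cast this
  have hAs : A ⊆ Set.Ico 0 1 := by
    rintro x ⟨h1, h2⟩
    refine ⟨le_trans (by positivity) h1, lt_of_lt_of_le h2 ?_⟩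
    rw [div_le_one hpos]; linarith
  have hBs : B ⊆ Set.Ico 0 1 := by
    rintro x ⟨h1, h2⟩
    refine ⟨le_trans (by positivity) h1, lt_of_lt_of_le h2 ?_⟩
    rw [div_le_one hpos]; linarith
  have mA : MeasurableSet A := measurableSet_Ico
  have mB : MeasurableSet B := measurableSet_Ico
  have key : ∀ x ∈ Set.Ico (0:ℝ) 1, φ x * hr j m x = A.indicator φ x - B.indicator φ x := by
    rintro x ⟨hx0, hx1⟩
    have hy : 0 ≤ (2:ℝ)^(j+1) * x := by positivity
    have eA : x ∈ A ↔ ⌊(2:ℝ) ^ (j + 1) * x⌋₊ = 2 * m := by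
      rw [Nat.floor_eq_iff hy, hA, Set.mem_Ico, div_le_iff₀ hpos, lt_div_iff₀ hpos]
      push_cast; rw [mul_comm x]
    have eB : x ∈ B ↔ ⌊(2:ℝ) ^ (j + 1) * x⌋₊ = 2 * m + 1 := by
      rw [Nat.floor_eq_iff hy, hB, Set.mem_Ico, div_le_iff₀ hpos, lt_div_iff₀ hpos]
      push_cast; rw [mul_comm x, add_assoc (2 * (m:ℝ)) 1 1]; norm_num
    unfold hr
    by_cases h1 : ⌊(2:ℝ) ^ (j + 1) * x⌋₊ = 2 * m
    · have h2 : x ∉ B := by rw [eB]; omega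
      rw [if_pos h1, Set.indicator_of_mem (eA.2 h1), Set.indicator_of_notMem h2]; ring
    · rw [if_neg h1, Set.indicator_of_notMem (fun h => h1 (eA.1 h))]
      by_cases h2 : ⌊(2:ℝ) ^ (j + 1) * x⌋₊ = 2 * m + 1
      · rw [if_pos h2, Set.indicator_of_mem (eB.2 h2)]; ring
      · rw [if_neg h2, Set.indicator_of_notMem (fun h => h2 (eB.1 h))]; ring
  have e : ∫ x, φ x * hr j m x ∂muI = ∫ x, (A.indicator φ x - B.indicator φ x) ∂muI :=
    setIntegral_congr_fun measurableSet_Ico key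
  rw [e, integral_sub (hφ.indicator mA) (hφ.indicator mB), integral_indicator mA,
    integral_indicator mB]
  unfold muI
  rw [Measure.restrict_restrict mA, Measure.restrict_restrict mB,
    Set.inter_eq_left.2 hAs, Set.inter_eq_left.2 hBs]

lemma hr_int_zero (j m : ℕ) (hm : m < 2 ^ j) : ∫ x, hr j m x ∂muI = 0 := by
  have := hr_integral j m hm (fun _ => 1) (integrable_const _)
  simp only [one_mul] at this
  rw [this]
  simp [← sub_div]
  ring_nf
  simp

lemma hr_int_const (j m : ℕ) (hm : m < 2 ^ j) (φ : ℝ → ℝ) (k : ℝ)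
    (h : ∀ x, ⌊(2:ℝ) ^ j * x⌋₊ = m → φ x = k) : ∫ x, φ x * hr j m x ∂muI = 0 := by
  have : ∀ x, φ x * hr j m x = k * hr j m x := by
    intro x
    by_cases hx : ⌊(2:ℝ) ^ j * x⌋₊ = m
    · rw [h x hx]
    · rw [hr_zero j m x hx]; simp
  simp_rw [this]
  rw [integral_const_mul, hr_int_zero j m hm, mul_zero]

lemma hr_orth_le (j m j' m' : ℕ) (hm : m < 2 ^ j) (hj : j' ≤ j)
    (hne : (j', m') ≠ (j, m)) : ∫ x, hr j' m' x * hr j m x ∂muI = 0 := by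
  rcases hj.eq_or_lt with rfl | hlt
  · apply hr_int_const j' m hm _ 0
    intro x hx
    apply hr_zero
    rw [hx]; rintro rfl; exact hne rfl
  · apply hr_int_const j m hm _ (if m / 2 ^ (j - (j'+1)) = 2 * m' then 1
      else if m / 2 ^ (j - (j'+1)) = 2 * m' + 1 then -1 else 0)
    intro x hx
    unfold hr
    rw [floor_half (j'+1) j hlt, hx]

lemma hr_orth (j m j' m' : ℕ) (hm : m < 2 ^ j) (hm' : m' < 2 ^ j')
    (hne : (j, m) ≠ (j', m')) : ∫ x, hr j m x * hr j' m' x ∂muI = 0 := by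
  rcases le_total j' j with h | h
  · simp_rw [mul_comm (hr j m _)]
    exact hr_orth_le j m j' m' hm h hne.symm
  · exact hr_orth_le j' m' j m hm' h hne

lemma hr_integrable (j m : ℕ) : Integrable (hr j m) muI :=
  Integrable.of_bound (hr_meas j m).aestronglyMeasurable 1 (Filter.Eventually.of_forall (hr_bdd j m))

lemma hr_norm (j m : ℕ) (hm : m < 2 ^ j) : ∫ x, hr j m x * hr j m x ∂muI = 1 / 2 ^ j := by
  rw [hr_integral j m hm _ (hr_integrable j m)]
  have hpos : (0:ℝ) < 2 ^ (j+1) := by positivity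
  have e1 : ∫ x in Set.Ico ((2 * m : ℝ) / 2 ^ (j+1)) ((2 * m + 1 : ℝ) / 2 ^ (j+1)), hr j m x
      = ∫ x in Set.Ico ((2 * m : ℝ) / 2 ^ (j+1)) ((2 * m + 1 : ℝ) / 2 ^ (j+1)), (1:ℝ) := by
    apply setIntegral_congr_fun measurableSet_Ico
    rintro x ⟨h1, h2⟩
    have hx : 0 ≤ x := le_trans (by positivity) h1
    rw [div_le_iff₀ hpos] at h1
    rw [lt_div_iff₀ hpos] at h2
    have : ⌊(2:ℝ) ^ (j + 1) * x⌋₊ = 2 * m := by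
      rw [Nat.floor_eq_iff (by positivity)]; push_cast; constructor <;> linarith
    simp [hr, this]
  have e2 : ∫ x in Set.Ico ((2 * m + 1 : ℝ) / 2 ^ (j+1)) ((2 * m + 2 : ℝ) / 2 ^ (j+1)), hr j m x
      = ∫ x in Set.Ico ((2 * m + 1 : ℝ) / 2 ^ (j+1)) ((2 * m + 2 : ℝ) / 2 ^ (j+1)), (-1:ℝ) := by
    apply setIntegral_congr_fun measurableSet_Ico
    rintro x ⟨h1, h2⟩
    have hx : 0 ≤ x := le_trans (by positivity) h1
    rw [div_le_iff₀ hpos] at h1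
    rw [lt_div_iff₀ hpos] at h2
    have : ⌊(2:ℝ) ^ (j + 1) * x⌋₊ = 2 * m + 1 := by
      rw [Nat.floor_eq_iff (by positivity)]; push_cast; constructor <;> linarith
    simp [hr, this]
  rw [e1, e2]
  have l1 : (0:ℝ) ≤ (2 * m + 1 : ℝ) / 2 ^ (j+1) - (2 * m : ℝ) / 2 ^ (j+1) := by
    rw [← sub_div]; apply div_nonneg _ hpos.le; linarith
  have l2 : (0:ℝ) ≤ (2 * m + 2 : ℝ) / 2 ^ (j+1) - (2 * m + 1 : ℝ) / 2 ^ (j+1) := by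
    rw [← sub_div]; apply div_nonneg _ hpos.le; linarith
  simp only [setIntegral_const, Real.volume_real_Ico, smul_eq_mul, max_eq_left l1, max_eq_left l2]
  rw [pow_succ]; field_simp; ring

lemma id_integrable_s17 : Integrable (fun x : ℝ => x) muI := by
  have hm : Measurable (fun x : ℝ => x) := measurable_id
  apply Integrable.of_bound hm.aestronglyMeasurable 1
  apply ae_restrict_of_forall_mem measurableSet_Ico
  rintro x ⟨h0, h1⟩
  rw [Real.norm_eq_abs, abs_of_nonneg h0]; exact h1.le

lemma hr_id (j m : ℕ) (hm : m < 2 ^ j) : ∫ x, x * hr j m x ∂muI = - (1 / 2 ^ (2 * j + 2)) := by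
  rw [hr_integral j m hm _ id_integrable_s17]
  have hpos : (0:ℝ) < 2 ^ (j+1) := by positivity
  have l1 : (2 * m : ℝ) / 2 ^ (j+1) ≤ (2 * m + 1 : ℝ) / 2 ^ (j+1) := by gcongr; linarith
  have l2 : (2 * m + 1 : ℝ) / 2 ^ (j+1) ≤ (2 * m + 2 : ℝ) / 2 ^ (j+1) := by gcongr; linarith
  rw [integral_Ico_eq_integral_Ioc, integral_Ico_eq_integral_Ioc,
    ← intervalIntegral.integral_of_le l1, ← intervalIntegral.integral_of_le l2,
    integral_id, integral_id]
  have : (2:ℝ) ^ (2 * j + 2) = 2 ^ (j+1) * 2 ^ (j+1) := by rw [← pow_add]; congr 1; ring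
  rw [this]; field_simp; ring

lemma memLp_mul (u v : ℝ → ℝ) (hu : Measurable u) (hv : Measurable v)
    (bu : ∀ x ∈ Set.Ico (0:ℝ) 1, |u x| ≤ 1) (bv : ∀ x ∈ Set.Ico (0:ℝ) 1, |v x| ≤ 1) :
    MemLp (fun x : ℝ × ℝ => u x.1 * v x.2) 2 (muI.prod muI) := by
  have hmeas : Measurable (fun x : ℝ × ℝ => u x.1 * v x.2) :=
    (hu.comp measurable_fst).mul (hv.comp measurable_snd)
  apply MemLp.of_bound hmeas.aestronglyMeasurable 1
  rw [← restrict_unitSq]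
  apply ae_restrict_of_forall_mem (measurableSet_Ico.prod measurableSet_Ico)
  rintro x ⟨h1, h2⟩
  rw [Real.norm_eq_abs, abs_mul]
  exact mul_le_one₀ (bu _ h1) (abs_nonneg _) (bv _ h2)

/-- step function -/
def stp (p x : ℝ) : ℝ := if p < x then 1 else 0

lemma stp_meas (p : ℝ) : Measurable (stp p) :=
  Measurable.ite measurableSet_Ioi measurable_const measurable_const

lemma stp_bdd (p x : ℝ) : |stp p x| ≤ 1 := by unfold stp; split_ifs <;> simp

lemma stp_int (p : ℝ) (j m : ℕ) (hm : m < 2 ^ j) (h : ⌊(2:ℝ) ^ j * p⌋₊ ≠ m) :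
    ∫ x, stp p x * hr j m x ∂muI = 0 := by
  apply hr_int_const j m hm _ (if ⌊(2:ℝ) ^ j * p⌋₊ < m then 1 else 0)
  intro x hx
  unfold stp
  have hpos : (0:ℝ) < 2 ^ j := by positivity
  congr 1
  apply propext
  constructor
  · intro hlt
    refine lt_of_le_of_ne ?_ h
    rw [← hx]
    exact Nat.floor_mono (by gcongr)
  · intro hlt
    by_contra hc
    push Not at hc
    have : ⌊(2:ℝ) ^ j * x⌋₊ ≤ ⌊(2:ℝ) ^ j * p⌋₊ := Nat.floor_mono (by gcongr)
    omega

/-- 2D Haar. -/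
def HH (t : Σ _ : ℕ × ℕ, ℕ × ℕ) (x : ℝ × ℝ) : ℝ := hr t.1.1 t.2.1 x.1 * hr t.1.2 t.2.2 x.2

lemma HH_mem (t) : MemLp (HH t) 2 (muI.prod muI) :=
  memLp_mul _ _ (hr_meas _ _) (hr_meas _ _) (fun x _ => hr_bdd _ _ x) (fun x _ => hr_bdd _ _ x)

lemma mul_HH_int (u v : ℝ → ℝ) (t) : ∫ x : ℝ × ℝ, (u x.1 * v x.2) * HH t x ∂(muI.prod muI)
    = (∫ x, u x * hr t.1.1 t.2.1 x ∂muI) * ∫ x, v x * hr t.1.2 t.2.2 x ∂muI := by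
  rw [← integral_prod_mul]
  congr 1; ext x; unfold HH; ring

lemma disc_eq (N : ℕ) (p : Fin N → ℝ × ℝ) (hp : ∀ i, p i ∈ unitSq) (x : ℝ × ℝ) :
    disc N p x = (∑ i, stp (p i).1 x.1 * stp (p i).2 x.2) - N * (x.1 * x.2) := by
  unfold disc
  rw [mul_assoc]
  congr 1
  apply Finset.sum_congr rfl
  intro i _
  have h1 : 0 ≤ (p i).1 := (hp i).1.1
  have h2 : 0 ≤ (p i).2 := (hp i).2.1
  unfold stp
  by_cases a : (p i).1 < x.1 <;> by_cases b : (p i).2 < x.2 <;> simp [a, b, h1, h2]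

lemma id_memLp : MemLp (fun x : ℝ × ℝ => x.1 * x.2) 2 (muI.prod muI) :=
  memLp_mul (fun x => x) (fun x => x) measurable_id measurable_id
    (fun x hx => by rw [abs_of_nonneg hx.1]; exact hx.2.le)
    (fun x hx => by rw [abs_of_nonneg hx.1]; exact hx.2.le)

lemma stp_memLp (p : ℝ × ℝ) :
    MemLp (fun x : ℝ × ℝ => stp p.1 x.1 * stp p.2 x.2) 2 (muI.prod muI) :=
  memLp_mul _ _ (stp_meas _) (stp_meas _) (fun x _ => stp_bdd _ x) (fun x _ => stp_bdd _ x)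

lemma disc_memLp (N : ℕ) (p : Fin N → ℝ × ℝ) (hp : ∀ i, p i ∈ unitSq) :
    MemLp (disc N p) 2 (muI.prod muI) := by
  rw [funext (disc_eq N p hp)]
  exact (memLp_finsetSum _ fun i _ => stp_memLp (p i)).sub (id_memLp.const_mul _)

lemma disc_coef (N : ℕ) (p : Fin N → ℝ × ℝ) (hp : ∀ i, p i ∈ unitSq) (t : Σ _ : ℕ × ℕ, ℕ × ℕ)
    (h1 : t.2.1 < 2 ^ t.1.1) (h2 : t.2.2 < 2 ^ t.1.2)
    (he : ∀ i, (⌊(2:ℝ) ^ t.1.1 * (p i).1⌋₊, ⌊(2:ℝ) ^ t.1.2 * (p i).2⌋₊) ≠ t.2) :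
    ∫ x, disc N p x * HH t x ∂(muI.prod muI)
      = - (N * (1 / 2 ^ (2 * t.1.1 + 2) * (1 / 2 ^ (2 * t.1.2 + 2)))) := by
  have e : ∀ x, disc N p x * HH t x = (∑ i, (stp (p i).1 x.1 * stp (p i).2 x.2) * HH t x)
      - N * ((x.1 * x.2) * HH t x) := by
    intro x; rw [disc_eq N p hp, sub_mul, Finset.sum_mul]; ring
  have i1 : ∀ i, Integrable (fun x => (stp (p i).1 x.1 * stp (p i).2 x.2) * HH t x)
      (muI.prod muI) := fun i => (stp_memLp (p i)).integrable_mul (HH_mem t)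
  have i2 : Integrable (fun x : ℝ × ℝ => (x.1 * x.2) * HH t x) (muI.prod muI) :=
    id_memLp.integrable_mul (HH_mem t)
  simp_rw [e]
  rw [integral_sub (integrable_finsetSum _ fun i _ => i1 i) (i2.const_mul _),
    integral_finsetSum _ (fun i _ => i1 i), integral_const_mul,
    mul_HH_int (fun x => x) (fun x => x), hr_id _ _ h1, hr_id _ _ h2, Finset.sum_eq_zero]
  · ring
  · intro i _
    rw [mul_HH_int]
    by_cases hh : ⌊(2:ℝ) ^ t.1.1 * (p i).1⌋₊ = t.2.1
    · rw [stp_int (p i).2 _ _ h2, mul_zero]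
      intro h'
      exact he i (Prod.ext hh h')
    · rw [stp_int (p i).1 _ _ h1 hh, zero_mul]

/-- indices of empty boxes -/
def emp (N : ℕ) (p : Fin N → ℝ × ℝ) (j : ℕ × ℕ) : Finset (ℕ × ℕ) :=
  (Finset.range (2 ^ j.1) ×ˢ Finset.range (2 ^ j.2)) \
    Finset.univ.image fun i => (⌊(2:ℝ) ^ j.1 * (p i).1⌋₊, ⌊(2:ℝ) ^ j.2 * (p i).2⌋₊)

lemma emp_card (N : ℕ) (p : Fin N → ℝ × ℝ) (j : ℕ × ℕ) :
    (2:ℝ) ^ (j.1 + j.2) - N ≤ (emp N p j).card := by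
  have h1 := Finset.le_card_sdiff
    (Finset.univ.image fun i => (⌊(2:ℝ) ^ j.1 * (p i).1⌋₊, ⌊(2:ℝ) ^ j.2 * (p i).2⌋₊))
    (Finset.range (2 ^ j.1) ×ˢ Finset.range (2 ^ j.2))
  have h2 : (Finset.univ.image fun i =>
      (⌊(2:ℝ) ^ j.1 * (p i).1⌋₊, ⌊(2:ℝ) ^ j.2 * (p i).2⌋₊)).card ≤ N := by
    simpa using Finset.card_image_le (s := (Finset.univ : Finset (Fin N)))
      (f := fun i => (⌊(2:ℝ) ^ j.1 * (p i).1⌋₊, ⌊(2:ℝ) ^ j.2 * (p i).2⌋₊))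
  rw [Finset.card_product, Finset.card_range, Finset.card_range, ← pow_add] at h1
  have h3 : 2 ^ (j.1 + j.2) ≤ (emp N p j).card + N := by unfold emp; omega
  have : (2:ℝ) ^ (j.1 + j.2) ≤ (emp N p j).card + N := by exact_mod_cast h3
  linarith

lemma main_bound (N : ℕ) (p : Fin N → ℝ × ℝ) (hp : ∀ i, p i ∈ unitSq) (T : Finset (ℕ × ℕ)) :
    ∑ j ∈ T, ((2:ℝ) ^ (j.1 + j.2) - N) * (2 ^ (j.1 + j.2) * (N ^ 2 / 2 ^ (4 * (j.1 + j.2) + 8)))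
      ≤ L2disc N p ^ 2 := by
  have hL : L2disc N p ^ 2 = ∫ x, disc N p x ^ 2 ∂(muI.prod muI) := by
    unfold L2disc
    rw [Real.sq_sqrt (integral_nonneg fun x => sq_nonneg _), restrict_unitSq]
  have hmem : ∀ t ∈ T.sigma (emp N p), t.2.1 < 2 ^ t.1.1 ∧ t.2.2 < 2 ^ t.1.2 ∧
      ∀ i, (⌊(2:ℝ) ^ t.1.1 * (p i).1⌋₊, ⌊(2:ℝ) ^ t.1.2 * (p i).2⌋₊) ≠ t.2 := by
    intro t ht
    have := (Finset.mem_sigma.1 ht).2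
    rw [emp, Finset.mem_sdiff, Finset.mem_product, Finset.mem_range, Finset.mem_range] at this
    refine ⟨this.1.1, this.1.2, fun i hi => this.2 ?_⟩
    exact Finset.mem_image.2 ⟨i, Finset.mem_univ _, hi⟩
  have hB := bessel_aux (muI.prod muI) (T.sigma (emp N p)) (disc N p) HH
    (fun t => 1 / 2 ^ t.1.1 * (1 / 2 ^ t.1.2)) (disc_memLp N p hp) HH_mem
    (fun t _ => by positivity)
    (fun t ht => by
      obtain ⟨h1, h2, _⟩ := hmem t ht
      rw [← hr_norm _ _ h1, ← hr_norm _ _ h2]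
      exact mul_HH_int (hr t.1.1 t.2.1) (hr t.1.2 t.2.2) t)
    (fun t ht s hs hne => by
      obtain ⟨h1, h2, _⟩ := hmem t ht
      obtain ⟨h3, h4, _⟩ := hmem s hs
      refine (mul_HH_int (hr t.1.1 t.2.1) (hr t.1.2 t.2.2) s).trans ?_
      by_cases h : (t.1.1, t.2.1) = (s.1.1, s.2.1)
      · rw [hr_orth t.1.2 t.2.2 s.1.2 s.2.2 h2 h4, mul_zero]
        intro h'
        apply hne
        obtain ⟨⟨a, b⟩, c, d⟩ := t
        obtain ⟨⟨a', b'⟩, c', d'⟩ := s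
        simp only [Prod.mk.injEq] at h h'
        obtain ⟨rfl, rfl⟩ := h
        obtain ⟨rfl, rfl⟩ := h'
        rfl
      · rw [hr_orth _ _ _ _ h1 h3 h, zero_mul])
  rw [hL]
  refine le_trans ?_ hB
  rw [Finset.sum_sigma]
  apply Finset.sum_le_sum
  intro j hj
  have e : ∀ m ∈ emp N p j, (∫ x, disc N p x * HH ⟨j, m⟩ x ∂(muI.prod muI)) ^ 2
      / (1 / 2 ^ j.1 * (1 / 2 ^ j.2)) =
      2 ^ (j.1 + j.2) * ((N:ℝ) ^ 2 / 2 ^ (4 * (j.1 + j.2) + 8)) := by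
    intro m hm
    obtain ⟨h1, h2, h3⟩ := hmem ⟨j, m⟩ (Finset.mem_sigma.2 ⟨hj, hm⟩)
    rw [disc_coef N p hp _ h1 h2 h3]
    have : (2:ℝ) ^ (4 * (j.1 + j.2) + 8) = (2 ^ (2 * j.1 + 2) * 2 ^ (2 * j.2 + 2)) ^ 2 := by
      rw [← pow_add, ← pow_mul]; congr 1; ring
    rw [this, pow_add 2 j.1 j.2]
    field_simp
  rw [Finset.sum_congr rfl e, Finset.sum_const, nsmul_eq_mul]
  exact mul_le_mul_of_nonneg_right (emp_card N p j) (by positivity)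

/-- If `P ⊂ [0,1)²` has `N = 2^{M+κ}` points with `M ∈ ℕ₀`, `0 ≤ κ < 1`, then
`‖D_P | L₂‖² ≥ Σ_{ℓ=M+1}^∞ (ℓ+1)·2^ℓ·(2^ℓ − 2^{M+κ})·2^{2M+2κ−4ℓ−8}`. -/
theorem l2disc_sq_ge_tail_sum (M : ℕ) (κ : ℝ) (hκ0 : 0 ≤ κ) (hκ1 : κ < 1)
    (N : ℕ) (p : Fin N → ℝ × ℝ) (hp : ∀ i, p i ∈ unitSq)
    (hN : (N : ℝ) = 2 ^ ((M : ℝ) + κ)) :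
    (∑' k : ℕ, (((M + 1 + k : ℕ) : ℝ) + 1) * (2:ℝ) ^ (M + 1 + k) *
        ((2:ℝ) ^ (M + 1 + k) - (2:ℝ) ^ ((M : ℝ) + κ)) *
        (2:ℝ) ^ (2 * (M : ℝ) + 2 * κ - 4 * ((M + 1 + k : ℕ) : ℝ) - 8))
      ≤ L2disc N p ^ 2 := by
  have hterm : ∀ k : ℕ, (((M + 1 + k : ℕ) : ℝ) + 1) * (2:ℝ) ^ (M + 1 + k) *
        ((2:ℝ) ^ (M + 1 + k) - (2:ℝ) ^ ((M : ℝ) + κ)) *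
        (2:ℝ) ^ (2 * (M : ℝ) + 2 * κ - 4 * ((M + 1 + k : ℕ) : ℝ) - 8)
      = ∑ j ∈ Finset.HasAntidiagonal.antidiagonal (M + 1 + k), ((2:ℝ) ^ (j.1 + j.2) - N) *
        (2 ^ (j.1 + j.2) * (N ^ 2 / 2 ^ (4 * (j.1 + j.2) + 8))) := by
    intro k
    have h1 : ∀ j ∈ Finset.HasAntidiagonal.antidiagonal (M + 1 + k), ((2:ℝ) ^ (j.1 + j.2) - N) *
        (2 ^ (j.1 + j.2) * ((N:ℝ) ^ 2 / 2 ^ (4 * (j.1 + j.2) + 8))) =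
        ((2:ℝ) ^ (M + 1 + k) - N) * (2 ^ (M + 1 + k) * (N ^ 2 / 2 ^ (4 * (M + 1 + k) + 8))) := by
      intro j hj
      rw [Finset.HasAntidiagonal.mem_antidiagonal.1 hj]
    rw [Finset.sum_congr rfl h1, Finset.sum_const, Finset.Nat.card_antidiagonal, nsmul_eq_mul]
    have h2 : (2:ℝ) ^ (2 * (M : ℝ) + 2 * κ - 4 * ((M + 1 + k : ℕ) : ℝ) - 8)
        = (N:ℝ) ^ 2 / 2 ^ (4 * (M + 1 + k) + 8) := by
      rw [hN, ← Real.rpow_mul_natCast (by norm_num), ← Real.rpow_natCast 2 (4 * (M + 1 + k) + 8),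
        ← Real.rpow_sub (by norm_num)]
      congr 1; push_cast; ring
    rw [h2, ← hN]; push_cast; ring
  have hNlt : ∀ k : ℕ, (N:ℝ) ≤ 2 ^ (M + 1 + k) := by
    intro k
    rw [hN, ← Real.rpow_natCast]
    apply Real.rpow_le_rpow_of_exponent_le (by norm_num)
    push_cast
    have : (0:ℝ) ≤ k := Nat.cast_nonneg k
    linarith
  apply Real.tsum_le_of_sum_range_le
  · intro k
    have := hNlt k
    rw [← hN]
    have h3 : (0:ℝ) ≤ 2 ^ (M + 1 + k) - N := by linarith
    positivity
  · intro K
    rw [Finset.sum_congr rfl fun k _ => hterm k, ← Finset.sum_biUnion]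
    · exact main_bound N p hp _
    · intro a _ b _ hab
      rw [Function.onFun, Finset.disjoint_left]
      intro j h1 h2
      rw [Finset.HasAntidiagonal.mem_antidiagonal] at h1 h2
      omega

end
end
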